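/- Let N be a nonempty finite index set, let b_i ∈ ℝ² and b_i* ∈ ℝ² be unit vectors, and for each j ∈ N let b_j ∈ ℝ², let b_j* ∈ ℝ² be a unit vector, and let α_j ∈ ℝ satisfy b_i* = R(α_j) b_j*. Then ⟨b_i − b_i*, P_{b_i} Σ_{j ∈ N} R(α_j) b_j⟩ ≤ −|N| · ‖P_{b_i} b_i*‖² + ‖P_{b_i} b_i*‖ · Σ_{j ∈ N} ‖b_j − b_j*‖, where P_{b_i} := I₂ − b_i b_iᵀ. -/

import Mathlib

open scoped RealInnerProductSpace
open Real Filter MeasureTheory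

/-- The orthogonal projection `P_b v = (I₂ - b bᵀ) v = v - ⟨b, v⟩ b`. -/
noncomputable def proj (b v : EuclideanSpace ℝ (Fin 2)) : EuclideanSpace ℝ (Fin 2) :=
  v - ⟪b, v⟫ • b

/-- The counterclockwise rotation of the plane through angle α. -/
noncomputable def rot (α : ℝ) (v : EuclideanSpace ℝ (Fin 2)) : EuclideanSpace ℝ (Fin 2) :=
  (WithLp.equiv 2 (Fin 2 → ℝ)).symm
    ![Real.cos α * v 0 - Real.sin α * v 1, Real.sin α * v 0 + Real.cos α * v 1]

/-- The unit vector at angle θ: (cos θ, sin θ). -/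
noncomputable def dir (θ : ℝ) : EuclideanSpace ℝ (Fin 2) :=
  (WithLp.equiv 2 (Fin 2 → ℝ)).symm ![Real.cos θ, Real.sin θ]

theorem inner_sub_proj {b : EuclideanSpace ℝ (Fin 2)} (hb : ‖b‖ = 1)
    (w v : EuclideanSpace ℝ (Fin 2)) : ⟪b - w, proj b v⟫ = -⟪proj b w, v⟫ := by
  simp only [proj, inner_sub_left, inner_sub_right, real_inner_smul_left, real_inner_smul_right,
    real_inner_self_eq_norm_sq, hb, real_inner_comm b w]
  ring

theorem inner_proj_self {b : EuclideanSpace ℝ (Fin 2)} (hb : ‖b‖ = 1)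
    (w : EuclideanSpace ℝ (Fin 2)) : ⟪proj b w, w⟫ = ‖proj b w‖ ^ 2 := by
  rw [← real_inner_self_eq_norm_sq]
  simp only [proj, inner_sub_left, inner_sub_right, real_inner_smul_left, real_inner_smul_right,
    real_inner_self_eq_norm_sq, norm_smul, mul_pow, Real.norm_eq_abs, sq_abs, hb,
    real_inner_comm b w]
  ring

theorem rot_sub (α : ℝ) (v w : EuclideanSpace ℝ (Fin 2)) :
    rot α (v - w) = rot α v - rot α w := by
  ext i
  fin_cases i <;> simp [rot] <;> ring

theorem norm_rot (α : ℝ) (v : EuclideanSpace ℝ (Fin 2)) : ‖rot α v‖ = ‖v‖ := by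
  rw [EuclideanSpace.norm_eq, EuclideanSpace.norm_eq]
  congr 1
  simp only [rot, Fin.sum_univ_two, Real.norm_eq_abs, sq_abs, WithLp.equiv_symm_apply,
    Matrix.cons_val_zero, Matrix.cons_val_one]
  linear_combination (v 0 ^ 2 + v 1 ^ 2) * Real.sin_sq_add_cos_sq α

/-- Lyapunov derivative bound for agent i: with b_i* = R(α_j) b_j* for all j ∈ N,
⟨b_i - b_i*, P_{b_i} Σ_j R(α_j) b_j⟩ ≤ -|N|‖P_{b_i} b_i*‖² + ‖P_{b_i} b_i*‖ Σ_j ‖b_j - b_j*‖. -/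
theorem stmt11 {ι : Type*} (N : Finset ι) (hN : N.Nonempty)
    (bi bis : EuclideanSpace ℝ (Fin 2)) (hbi : ‖bi‖ = 1) (hbis : ‖bis‖ = 1)
    (bj : ι → EuclideanSpace ℝ (Fin 2)) (bjs : ι → EuclideanSpace ℝ (Fin 2)) (αj : ι → ℝ)
    (hunit : ∀ j ∈ N, ‖bjs j‖ = 1)
    (hang : ∀ j ∈ N, bis = rot (αj j) (bjs j)) :
    ⟪bi - bis, proj bi (∑ j ∈ N, rot (αj j) (bj j))⟫ ≤
      -(N.card : ℝ) * ‖proj bi bis‖ ^ 2 + ‖proj bi bis‖ * ∑ j ∈ N, ‖bj j - bjs j‖ := by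
  have key : ∀ j ∈ N, -⟪proj bi bis, rot (αj j) (bj j)⟫ ≤
      -‖proj bi bis‖ ^ 2 + ‖proj bi bis‖ * ‖bj j - bjs j‖ := by
    intro j hj
    have hcs := (abs_le.mp (abs_real_inner_le_norm (proj bi bis) (rot (αj j) (bj j - bjs j)))).1
    rw [norm_rot, rot_sub, ← hang j hj, inner_sub_right, inner_proj_self hbi] at hcs
    linarith
  calc ⟪bi - bis, proj bi (∑ j ∈ N, rot (αj j) (bj j))⟫
      = ∑ j ∈ N, -⟪proj bi bis, rot (αj j) (bj j)⟫ := by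
        rw [inner_sub_proj hbi, inner_sum, Finset.sum_neg_distrib]
    _ ≤ ∑ j ∈ N, (-‖proj bi bis‖ ^ 2 + ‖proj bi bis‖ * ‖bj j - bjs j‖) := Finset.sum_le_sum key
    _ = -(N.card : ℝ) * ‖proj bi bis‖ ^ 2 + ‖proj bi bis‖ * ∑ j ∈ N, ‖bj j - bjs j‖ := by
        rw [Finset.sum_add_distrib, Finset.sum_const, nsmul_eq_mul, Finset.mul_sum]
        ring
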